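/- Let ξ(·) be a functional-valued map into ℓ₁^{(n)} on a domain D ⊆ ℂᵐ that is holomorphic (each coefficient function w ↦ ξ_α(w) is holomorphic) and satisfies the locally uniformly bounded property near w₀ ∈ D. If F(z,w) is holomorphic on a neighborhood of (z₀, w₀) in ℂ^{n+m}, then the function (z,w) ↦ (ξ(w)·F(·,w))(z) = ∑_{α∈ℕⁿ} ξ_α(w) (∂^{|α|}F/∂z^α)(z,w)/α! is holomorphic in (z,w) near (z₀, w₀). -/

import Mathlib

/-!
Near a point of `Ω`, Cauchy's estimates bound `∂^α F / α!` by `M / s ^ |α|` for some `s > 0`, while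
the local uniform bound at the radius `ρ = 2 / s` gives `|ξ_α(w)| ≤ C (s / 2) ^ |α|`. The terms of
the series are therefore dominated by `C M 2 ^ (-|α|)` and the Weierstrass M-test applies, provided
that `∂^α F` is jointly holomorphic in `(z, w)` and that uniform limits of holomorphic functions on
a normed space are holomorphic. Both follow from a second-order Schwarz lemma,
`‖f z - f c - f'(c) (z - c)‖ ≤ 4 M (‖z - c‖ / R) ^ 2` when `‖f‖ ≤ M` on the ball of radius `R`
about `c`: this estimate passes to uniform limits, and it makes difference quotients converge
uniformly to directional derivatives.
-/

open MeasureTheory Filter Topology Complex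
open scoped ENNReal
noncomputable section

/-- The total degree `|α|` of a multi-index. -/
def mdeg {n : ℕ} (α : Fin n → ℕ) : ℕ := ∑ i, α i

/-- The factorial `α!` of a multi-index. -/
def mfact {n : ℕ} (α : Fin n → ℕ) : ℕ := ∏ i, Nat.factorial (α i)

/-- Partial derivative in the `i`-th coordinate direction. -/
def pderivC {n : ℕ} (i : Fin n) (f : (Fin n → ℂ) → ℂ) : (Fin n → ℂ) → ℂ :=
  fun z => deriv (fun t : ℂ => f (Function.update z i t)) (z i)

/-- Iterated partial derivative `∂^{|α|} f / ∂z^α`. -/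
def multiDeriv {n : ℕ} (α : Fin n → ℕ) (f : (Fin n → ℂ) → ℂ) : (Fin n → ℂ) → ℂ :=
  (List.finRange n).foldr (fun i g => (pderivC i)^[α i] g) f

/-- Membership in `ℓ₁^{(n)}`: `∑_α |ξ_α| ρ^{|α|} < ∞` for every `ρ > 0`. -/
def MemL1 {n : ℕ} (ξ : (Fin n → ℕ) → ℂ) : Prop :=
  ∀ ρ : ℝ, 0 < ρ → Summable fun α : Fin n → ℕ => ‖ξ α‖ * ρ ^ mdeg α

/-- The action `(ξ·f)(z) = ∑_α ξ_α f^{(α)}(z)/α!`. -/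
def xiAct {n : ℕ} (ξ : (Fin n → ℕ) → ℂ) (f : (Fin n → ℂ) → ℂ) (z : Fin n → ℂ) : ℂ :=
  ∑' α : Fin n → ℕ, ξ α * multiDeriv α f z / (mfact α : ℂ)

/-- Plurisubharmonicity of an `EReal`-valued function on a set: upper semicontinuity
together with the sub-mean value inequality on every complex circle whose closed disc
is contained in the set (expressed via integrable real-valued majorants). -/
def PlurisubharmonicOn {E : Type*} [NormedAddCommGroup E] [NormedSpace ℂ E]
    (f : E → EReal) (s : Set E) : Prop :=
  UpperSemicontinuousOn f s ∧
  ∀ z ∈ s, ∀ v : E, (∀ t : ℂ, ‖t‖ ≤ 1 → z + t • v ∈ s) →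
    ∀ g : ℝ → ℝ, IntervalIntegrable g volume 0 (2 * Real.pi) →
      (∀ θ : ℝ, f (z + Complex.exp (θ * Complex.I) • v) ≤ (g θ : EReal)) →
      f z ≤ (((2 * Real.pi)⁻¹ * ∫ θ in (0:ℝ)..(2 * Real.pi), g θ : ℝ) : EReal)

/-- The weighted `L²` integral `∫_D |f|² e^{-ψ}`. -/
def wL2 {n : ℕ} (D : Set (Fin n → ℂ)) (ψ : (Fin n → ℂ) → ℝ) (f : (Fin n → ℂ) → ℂ) : ℝ≥0∞ :=
  ∫⁻ z in D, ENNReal.ofReal (‖f z‖ ^ 2 * Real.exp (-ψ z))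

/-- Membership in the weighted Bergman space `A²(D, e^{-ψ})`. -/
def MemA2 {n : ℕ} (D : Set (Fin n → ℂ)) (ψ : (Fin n → ℂ) → ℝ) (f : (Fin n → ℂ) → ℂ) : Prop :=
  DifferentiableOn ℂ f D ∧ wL2 D ψ f < ⊤

/-- The weighted `ξ`-Bergman kernel `K^ψ_{ξ,D}(z)`. -/
def xiBergman {n : ℕ} (ξ : (Fin n → ℕ) → ℂ) (D : Set (Fin n → ℂ))
    (ψ : (Fin n → ℂ) → ℝ) (z : Fin n → ℂ) : ℝ≥0∞ :=
  ⨆ f : {f // MemA2 D ψ f}, ENNReal.ofReal (‖xiAct ξ f.1 z‖ ^ 2) / wL2 D ψ f.1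

/-- The locally uniformly bounded property for a functional-valued function on `D`. -/
def LocUnifBdd {n m : ℕ} (ξ : (Fin m → ℂ) → (Fin n → ℕ) → ℂ) (D : Set (Fin m → ℂ)) : Prop :=
  ∀ w ∈ D, ∀ ρ : ℝ, 0 < ρ → ∃ V ∈ 𝓝 w, ∃ C : ℝ,
    ∀ w' ∈ V ∩ D, (∑' α : Fin n → ℕ, ENNReal.ofReal (‖ξ w' α‖ * ρ ^ mdeg α)) ≤ ENNReal.ofReal C

section NormedSpace

variable {E F : Type*} [NormedAddCommGroup E] [NormedSpace ℂ E]
  [NormedAddCommGroup F] [NormedSpace ℂ F]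

theorem exists_ball_subset_forall_norm_le {X Y : Type*} [PseudoMetricSpace X]
    [SeminormedAddCommGroup Y] {f : X → Y} {s : Set X} {x : X} (hs : s ∈ 𝓝 x)
    (hf : ContinuousAt f x) :
    ∃ R > 0, Metric.ball x R ⊆ s ∧ ∃ M, ∀ y ∈ Metric.ball x R, ‖f y‖ ≤ M := by
  have hbdd : ∀ᶠ y in 𝓝 x, ‖f y‖ ≤ ‖f x‖ + 1 := hf.norm.eventually_le_const (lt_add_one _)
  obtain ⟨R, hR, h⟩ := Metric.eventually_nhds_iff_ball.1 (hbdd.and hs)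
  exact ⟨R, hR, fun y hy => (h y hy).2, _, fun y hy => (h y hy).1⟩

theorem norm_fderiv_le_of_forall_mem_ball_norm_le {f : E → F} {c : E} {R M : ℝ} (hR : 0 < R)
    (hf : DifferentiableOn ℂ f (Metric.ball c R)) (hM : ∀ y ∈ Metric.ball c R, ‖f y‖ ≤ M) :
    ‖fderiv ℂ f c‖ ≤ 2 * M / R := by
  refine Complex.norm_fderiv_le_div_of_mapsTo_ball hf (fun y hy => ?_) hR
  rw [Metric.mem_closedBall, dist_eq_norm]
  linarith [norm_sub_le (f y) (f c), hM y hy, hM c (Metric.mem_ball_self hR)]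

/- The Schwarz lemma in its second-order form, applied to `y ↦ f y - f'(c) (y - c)`, which agrees
with the constant `f c` up to `o(‖y - c‖)`. -/
theorem norm_sub_sub_fderiv_apply_le {f : E → F} {c z : E} {R M : ℝ}
    (hf : DifferentiableOn ℂ f (Metric.ball c R)) (hM : ∀ y ∈ Metric.ball c R, ‖f y‖ ≤ M)
    (hz : z ∈ Metric.ball c R) :
    ‖f z - f c - fderiv ℂ f c (z - c)‖ ≤ 4 * M * (‖z - c‖ / R) ^ 2 := by
  have hR : 0 < R := Metric.nonempty_ball.1 ⟨z, hz⟩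
  have hc : c ∈ Metric.ball c R := Metric.mem_ball_self hR
  set h : E → F := fun y => f y - fderiv ℂ f c (y - c) with h_def
  have h_sub (y : E) : h y - h c = f y - f c - fderiv ℂ f c (y - c) := by
    simp only [h_def, sub_self, map_zero, sub_zero]
    abel
  have h_diff : DifferentiableOn ℂ h (Metric.ball c R) := hf.fun_sub (by fun_prop)
  have h_maps : Set.MapsTo h (Metric.ball c R) (Metric.closedBall (h c) (4 * M)) := fun y hy => by
    have hlin : ‖fderiv ℂ f c (y - c)‖ ≤ 2 * M :=
      calc ‖fderiv ℂ f c (y - c)‖ ≤ 2 * M / R * R :=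
            (fderiv ℂ f c).le_of_opNorm_le_of_le
              (norm_fderiv_le_of_forall_mem_ball_norm_le hR hf hM) (mem_ball_iff_norm.1 hy).le
        _ = 2 * M := div_mul_cancel₀ _ hR.ne'
    rw [Metric.mem_closedBall, dist_eq_norm, h_sub]
    linarith [norm_sub_le (f y - f c) (fderiv ℂ f c (y - c)), norm_sub_le (f y) (f c), hM y hy,
      hM c hc]
  have h_small : (h · - h c) =o[𝓝 c] fun y => ‖y - c‖ ^ 1 := by
    simp only [h_sub, pow_one]
    exact (hf.differentiableAt (Metric.ball_mem_nhds c hR)).hasFDerivAt.isLittleO.norm_right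
  simpa only [dist_eq_norm, h_sub] using
    Complex.dist_le_mul_div_pow_of_mapsTo_ball_of_isLittleO h_diff h_maps h_small hz

theorem norm_inv_smul_sub_sub_fderiv_apply_le {f : E → F} {c v : E} {R M : ℝ} {t : ℂ}
    (hf : DifferentiableOn ℂ f (Metric.ball c R)) (hM : ∀ y ∈ Metric.ball c R, ‖f y‖ ≤ M)
    (ht₀ : t ≠ 0) (ht : c + t • v ∈ Metric.ball c R) :
    ‖t⁻¹ • (f (c + t • v) - f c) - fderiv ℂ f c v‖ ≤ 4 * M * (‖v‖ / R) ^ 2 * ‖t‖ := by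
  have hbound := norm_sub_sub_fderiv_apply_le hf hM ht
  rw [add_sub_cancel_left, map_smul, norm_smul] at hbound
  have hquot : t⁻¹ • (f (c + t • v) - f c) - fderiv ℂ f c v =
      t⁻¹ • (f (c + t • v) - f c - t • fderiv ℂ f c v) := by
    rw [smul_sub _ _ (t • _), inv_smul_smul₀ ht₀]
  calc ‖t⁻¹ • (f (c + t • v) - f c) - fderiv ℂ f c v‖
      ≤ ‖t‖⁻¹ * (4 * M * (‖t‖ * ‖v‖ / R) ^ 2) := by
        rw [hquot, norm_smul, norm_inv]
        gcongr
    _ = 4 * M * (‖v‖ / R) ^ 2 * ‖t‖ := by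
        have := norm_ne_zero_iff.2 ht₀
        field_simp

theorem cauchy_map_fderiv_of_uniformCauchySeqOn {ι : Type*} {l : Filter ι} [l.NeBot]
    {f : ι → E → F} {x : E} {s : Set E} (hs : s ∈ 𝓝 x) (hcau : UniformCauchySeqOn f l s)
    (hf : ∀ᶠ i in l, DifferentiableOn ℂ (f i) s) : Cauchy (l.map fun i => fderiv ℂ (f i) x) := by
  obtain ⟨R, hR, hRs⟩ := Metric.mem_nhds_iff.1 hs
  rw [cauchy_map_iff', Metric.uniformity_basis_dist.tendsto_right_iff]
  intro ε hε
  filter_upwards [hcau _ (Metric.dist_mem_uniformity (show 0 < ε * R / 4 by positivity)),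
    hf.prod_mk hf] with i hi hd
  have hsub : ‖fderiv ℂ (f i.1 - f i.2) x‖ ≤ 2 * (ε * R / 4) / R :=
    norm_fderiv_le_of_forall_mem_ball_norm_le hR ((hd.1.sub hd.2).mono hRs) fun y hy => by
      simpa only [dist_eq_norm, Pi.sub_apply] using (hi y (hRs hy)).le
  rw [fderiv_sub (hd.1.differentiableAt hs) (hd.2.differentiableAt hs)] at hsub
  calc dist (fderiv ℂ (f i.1) x) (fderiv ℂ (f i.2) x) ≤ 2 * (ε * R / 4) / R := by
        rwa [dist_eq_norm]
    _ = ε / 2 := by field_simp; ring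
    _ < ε := half_lt_self hε

theorem differentiableAt_of_tendstoUniformlyOn [CompleteSpace F] {ι : Type*} {l : Filter ι}
    [l.NeBot] {f : ι → E → F} {g : E → F} {x : E} {s : Set E} (hs : s ∈ 𝓝 x)
    (hfg : TendstoUniformlyOn f g l s) (hf : ∀ᶠ i in l, DifferentiableOn ℂ (f i) s) :
    DifferentiableAt ℂ g x := by
  obtain ⟨L, hL⟩ := cauchy_map_iff_exists_tendsto.1
    (cauchy_map_fderiv_of_uniformCauchySeqOn hs hfg.uniformCauchySeqOn hf)
  have hg : ContinuousAt g x :=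
    (hfg.continuousOn (hf.mono fun _ h => h.continuousOn).frequently).continuousAt hs
  obtain ⟨R, hR, hRs, M, hM⟩ := exists_ball_subset_forall_norm_le hs hg
  have hf_bdd : ∀ᶠ i in l, ∀ y ∈ Metric.ball x R, ‖f i y‖ ≤ M + 1 := by
    filter_upwards [Metric.tendstoUniformlyOn_iff.1 hfg 1 one_pos] with i hi y hy
    have := hi y (hRs hy)
    rw [dist_eq_norm] at this
    linarith [hM y hy, norm_le_norm_add_norm_sub (g y) (f i y)]
  have hquad : ∀ z ∈ Metric.ball x R,
      ‖g z - g x - L (z - x)‖ ≤ 4 * (M + 1) * (‖z - x‖ / R) ^ 2 := by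
    intro z hz
    have hlim : Tendsto (fun i => ‖f i z - f i x - fderiv ℂ (f i) x (z - x)‖) l
        (𝓝 ‖g z - g x - L (z - x)‖) :=
      (((hfg.tendsto_at (hRs hz)).sub (hfg.tendsto_at (mem_of_mem_nhds hs))).sub
        (((ContinuousLinearMap.apply ℂ F (z - x)).continuous.tendsto L).comp hL)).norm
    refine le_of_tendsto hlim ?_
    filter_upwards [hf, hf_bdd] with i hi hbdd
    exact norm_sub_sub_fderiv_apply_le (hi.mono hRs) hbdd hz
  have hbigO : (fun z => g z - g x - L (z - x)) =O[𝓝 x] fun z => ‖z - x‖ ^ 2 := by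
    refine .of_bound (4 * (M + 1) / R ^ 2) ?_
    filter_upwards [Metric.ball_mem_nhds x hR] with z hz
    rw [norm_pow, norm_norm]
    exact (hquad z hz).trans_eq (by ring)
  exact (HasFDerivAt.of_isLittleO
    (hbigO.trans_isLittleO (Asymptotics.isLittleO_pow_sub_sub x one_lt_two))).differentiableAt

theorem differentiableAt_tsum_of_forall_norm_le [CompleteSpace F] {ι : Type*} {f : ι → E → F}
    {u : ι → ℝ} {x : E} {s : Set E} (hs : s ∈ 𝓝 x) (hu : Summable u)
    (hf : ∀ i, DifferentiableOn ℂ (f i) s) (hfu : ∀ i, ∀ y ∈ s, ‖f i y‖ ≤ u i) :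
    DifferentiableAt ℂ (fun y => ∑' i, f i y) x :=
  differentiableAt_of_tendstoUniformlyOn hs (tendstoUniformlyOn_tsum hu hfu)
    (.of_forall fun _ => .fun_sum fun i _ => hf i)

theorem eventually_forall_add_smul_mem_ball (v : E) {r : ℝ} (hr : 0 < r) :
    ∀ᶠ t : ℂ in 𝓝 0, ∀ y, y + t • v ∈ Metric.ball y r := by
  have hlim : Tendsto (fun t : ℂ => ‖t • v‖) (𝓝 0) (𝓝 0) :=
    (by fun_prop : Continuous fun t : ℂ => ‖t • v‖).tendsto' 0 0 (by simp)
  filter_upwards [hlim.eventually_lt_const hr] with t ht y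
  rwa [mem_ball_iff_norm, add_sub_cancel_left]

theorem tendstoUniformlyOn_inv_smul_sub_fderiv_apply {f : E → F} {c : E} {r R M : ℝ} (hr : r < R)
    (hf : DifferentiableOn ℂ f (Metric.ball c R)) (hM : ∀ y ∈ Metric.ball c R, ‖f y‖ ≤ M) (v : E) :
    TendstoUniformlyOn (fun (t : ℂ) y => t⁻¹ • (f (y + t • v) - f y))
      (fun y => fderiv ℂ f y v) (𝓝[≠] 0) (Metric.ball c r) := by
  rw [Metric.tendstoUniformlyOn_iff]
  intro ε hε
  have hrate : Tendsto (fun t : ℂ => 4 * M * (‖v‖ / (R - r)) ^ 2 * ‖t‖) (𝓝 0) (𝓝 0) :=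
    (by fun_prop : Continuous fun t : ℂ => 4 * M * (‖v‖ / (R - r)) ^ 2 * ‖t‖).tendsto' 0 0
      (by simp)
  filter_upwards [nhdsWithin_le_nhds (hrate.eventually_lt_const hε), self_mem_nhdsWithin,
    nhdsWithin_le_nhds (eventually_forall_add_smul_mem_ball v (sub_pos.2 hr))]
    with t ht ht₀ htv y hy
  have hball : Metric.ball y (R - r) ⊆ Metric.ball c R :=
    Metric.ball_subset_ball' (by linarith [Metric.mem_ball.1 hy])
  rw [dist_comm, dist_eq_norm]
  exact (norm_inv_smul_sub_sub_fderiv_apply_le (hf.mono hball) (fun z hz => hM z (hball hz)) ht₀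
    (htv y)).trans_lt ht

theorem differentiableOn_fderiv_apply [CompleteSpace F] {f : E → F} {s : Set E} (hs : IsOpen s)
    (hf : DifferentiableOn ℂ f s) (v : E) : DifferentiableOn ℂ (fun x => fderiv ℂ f x v) s := by
  intro x hx
  obtain ⟨R, hR, hRs, M, hM⟩ := exists_ball_subset_forall_norm_le (hs.mem_nhds hx)
    (hf.continuousOn.continuousAt (hs.mem_nhds hx))
  refine (differentiableAt_of_tendstoUniformlyOn (Metric.ball_mem_nhds x (half_pos hR))
    (tendstoUniformlyOn_inv_smul_sub_fderiv_apply (half_lt_self hR) (hf.mono hRs) hM v)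
    ?_).differentiableWithinAt
  filter_upwards [nhdsWithin_le_nhds (eventually_forall_add_smul_mem_ball v (half_pos hR))]
    with t ht
  have hshift : Set.MapsTo (fun y => y + t • v) (Metric.ball x (R / 2)) s := fun y hy =>
    hRs (Metric.ball_subset_ball' (by linarith [Metric.mem_ball.1 hy]) (ht y))
  refine (DifferentiableOn.fun_sub ?_ ?_).const_smul t⁻¹
  · exact hf.comp (by fun_prop) hshift
  · exact hf.mono ((Metric.ball_subset_ball (half_le_self hR.le)).trans hRs)

end NormedSpace

theorem summable_pow_mdeg (n : ℕ) {q : ℝ} (h₀ : 0 ≤ q) (h₁ : q < 1) :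
    Summable fun α : Fin n → ℕ => q ^ mdeg α := by
  induction n with
  | zero => exact .of_finite
  | succ n ih =>
    rw [← (Fin.consEquiv fun _ : Fin (n + 1) => ℕ).summable_iff]
    refine ((summable_geometric_of_lt_one h₀ h₁).mul_of_nonneg ih (fun _ => by positivity)
      fun _ => by positivity).congr fun x => ?_
    simp [mdeg, Fin.consEquiv, Fin.sum_univ_succ, pow_add]

theorem mfact_pos {n : ℕ} (α : Fin n → ℕ) : 0 < mfact α :=
  Finset.prod_pos fun i _ => (α i).factorial_pos

theorem iterate_pderivC_eq_iteratedDeriv {n : ℕ} (i : Fin n) (f : (Fin n → ℂ) → ℂ) (k : ℕ)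
    (z : Fin n → ℂ) :
    (pderivC i)^[k] f z = iteratedDeriv k (fun t => f (Function.update z i t)) (z i) := by
  induction k generalizing z with
  | zero => simp
  | succ k ih =>
    rw [Function.iterate_succ_apply', iteratedDeriv_succ]
    simp only [pderivC, ih, Function.update_idem, Function.update_self]

theorem LocUnifBdd.exists_eventually_forall_norm_mul_pow_le {n m : ℕ}
    {ξ : (Fin m → ℂ) → (Fin n → ℕ) → ℂ} {D : Set (Fin m → ℂ)} (hξ : LocUnifBdd ξ D)
    (hD : IsOpen D) {w : Fin m → ℂ} (hw : w ∈ D) {ρ : ℝ} (hρ : 0 < ρ) :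
    ∃ C, ∀ᶠ w' in 𝓝 w, ∀ α, ‖ξ w' α‖ * ρ ^ mdeg α ≤ C := by
  obtain ⟨V, hV, C, hC⟩ := hξ w hw ρ hρ
  refine ⟨max C 0, ?_⟩
  filter_upwards [hV, hD.mem_nhds hw] with w' hwV hwD α
  have hterm := (ENNReal.le_tsum α).trans (hC w' ⟨hwV, hwD⟩)
  exact (ENNReal.ofReal_le_ofReal_iff'.1 hterm).elim le_max_of_le_left le_max_of_le_right

section Parametric

variable {n : ℕ} {E : Type*}

/-- The function of `(z, w)` obtained by applying an operator `T` on functions of `z` to `G(·, w)`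
for each fixed `w`. -/
def applyFst (T : ((Fin n → ℂ) → ℂ) → (Fin n → ℂ) → ℂ) (G : (Fin n → ℂ) × E → ℂ)
    (p : (Fin n → ℂ) × E) : ℂ :=
  T (fun z => G (z, p.2)) p.1

variable [NormedAddCommGroup E] [NormedSpace ℂ E] {G : (Fin n → ℂ) × E → ℂ}
  {Ω : Set ((Fin n → ℂ) × E)}

theorem hasDerivAt_update_fst (i : Fin n) (p : (Fin n → ℂ) × E) (t : ℂ) :
    HasDerivAt (fun t : ℂ => (Function.update p.1 i t, p.2))
      ((Pi.single i 1, 0) : (Fin n → ℂ) × E) t :=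
  (hasDerivAt_update p.1 i t).prodMk (hasDerivAt_const t p.2)

theorem applyFst_pderivC_eq_fderiv_apply (i : Fin n) {p : (Fin n → ℂ) × E}
    (hG : DifferentiableAt ℂ G p) :
    applyFst (pderivC i) G p = fderiv ℂ G p (Pi.single i 1, 0) := by
  have hG' : HasFDerivAt G (fderiv ℂ G p) (Function.update p.1 i (p.1 i), p.2) := by
    simpa only [Function.update_eq_self] using hG.hasFDerivAt
  exact (hG'.comp_hasDerivAt (p.1 i) (hasDerivAt_update_fst i p (p.1 i))).deriv

theorem differentiableOn_applyFst_iterate_pderivC (hΩ : IsOpen Ω) (hG : DifferentiableOn ℂ G Ω)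
    (i : Fin n) (k : ℕ) : DifferentiableOn ℂ (applyFst (pderivC i)^[k] G) Ω := by
  induction k with
  | zero => exact hG
  | succ k ih =>
    rw [Function.iterate_succ']
    exact (differentiableOn_fderiv_apply hΩ ih (Pi.single i 1, 0)).congr fun p hp =>
      applyFst_pderivC_eq_fderiv_apply i (ih.differentiableAt (hΩ.mem_nhds hp))

theorem differentiableOn_applyFst_foldr_pderivC (hΩ : IsOpen Ω) (hG : DifferentiableOn ℂ G Ω)
    (α : Fin n → ℕ) (l : List (Fin n)) :
    DifferentiableOn ℂ (applyFst (fun f => l.foldr (fun i g => (pderivC i)^[α i] g) f) G) Ω := by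
  induction l with
  | nil => exact hG
  | cons i l ih => exact differentiableOn_applyFst_iterate_pderivC hΩ ih i (α i)

theorem differentiableOn_applyFst_multiDeriv (hΩ : IsOpen Ω) (hG : DifferentiableOn ℂ G Ω)
    (α : Fin n → ℕ) : DifferentiableOn ℂ (applyFst (multiDeriv α) G) Ω :=
  differentiableOn_applyFst_foldr_pderivC hΩ hG α (List.finRange n)

theorem norm_applyFst_iterate_pderivC_le {p : (Fin n → ℂ) × E} {s M : ℝ} (hs : 0 < s)
    (hG : DifferentiableOn ℂ G (Metric.closedBall p s))
    (hM : ∀ q ∈ Metric.closedBall p s, ‖G q‖ ≤ M) (i : Fin n) (k : ℕ) :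
    ‖applyFst (pderivC i)^[k] G p‖ ≤ k.factorial / s ^ k * M := by
  have hmaps : Set.MapsTo (fun t : ℂ => (Function.update p.1 i t, p.2))
      (Metric.closedBall (p.1 i) s) (Metric.closedBall p s) := fun t ht => by
    rw [Metric.mem_closedBall, Prod.dist_eq, dist_self]
    refine max_le ((dist_pi_le_iff hs.le).2 fun j => ?_) hs.le
    rcases eq_or_ne j i with rfl | hj
    · simpa using ht
    · simpa [hj] using hs.le
  have hdiff : DifferentiableOn ℂ (fun t => G (Function.update p.1 i t, p.2))
      (Metric.closedBall (p.1 i) s) :=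
    hG.comp (fun t _ => (hasDerivAt_update_fst i p t).differentiableAt.differentiableWithinAt) hmaps
  rw [applyFst, iterate_pderivC_eq_iteratedDeriv, ← mul_div_right_comm]
  exact Complex.norm_iteratedDeriv_le_of_forall_mem_sphere_norm_le k hs
    (hdiff.mono Metric.closure_ball_subset_closedBall).diffContOnCl
    fun t ht => hM _ (hmaps (Metric.sphere_subset_closedBall ht))

theorem norm_applyFst_foldr_pderivC_le (hΩ : IsOpen Ω) (hG : DifferentiableOn ℂ G Ω)
    {p : (Fin n → ℂ) × E} {s M : ℝ} (hs : 0 < s) (α : Fin n → ℕ) (l : List (Fin n))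
    (hpΩ : Metric.closedBall p (l.length * s) ⊆ Ω)
    (hM : ∀ q ∈ Metric.closedBall p (l.length * s), ‖G q‖ ≤ M) :
    ‖applyFst (fun f => l.foldr (fun i g => (pderivC i)^[α i] g) f) G p‖ ≤
      (l.map fun i => ((α i).factorial / s ^ α i : ℝ)).prod * M := by
  induction l generalizing p with
  | nil => simpa [applyFst] using hM p (by simp)
  | cons i l ih =>
    have hball : ∀ q ∈ Metric.closedBall p s, Metric.closedBall q (l.length * s) ⊆
        Metric.closedBall p ((i :: l).length * s) := fun q hq =>
      Metric.closedBall_subset_closedBall' (by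
        rw [List.length_cons, Nat.cast_succ]
        linarith [Metric.mem_closedBall.1 hq])
    have hsub : Metric.closedBall p s ⊆ Ω := fun q hq =>
      hpΩ (hball q hq (Metric.mem_closedBall_self (by positivity)))
    rw [List.map_cons, List.prod_cons, mul_assoc]
    exact norm_applyFst_iterate_pderivC_le hs
      ((differentiableOn_applyFst_foldr_pderivC hΩ hG α l).mono hsub)
      (fun q hq => ih ((hball q hq).trans hpΩ) fun y hy => hM y (hball q hq hy)) i (α i)

theorem norm_applyFst_multiDeriv_le (hΩ : IsOpen Ω) (hG : DifferentiableOn ℂ G Ω)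
    {p : (Fin n → ℂ) × E} {s M : ℝ} (hs : 0 < s) (hpΩ : Metric.closedBall p (n * s) ⊆ Ω)
    (hM : ∀ q ∈ Metric.closedBall p (n * s), ‖G q‖ ≤ M) (α : Fin n → ℕ) :
    ‖applyFst (multiDeriv α) G p‖ ≤ mfact α / s ^ mdeg α * M := by
  have hprod : ((List.finRange n).map fun i => ((α i).factorial / s ^ α i : ℝ)).prod =
      mfact α / s ^ mdeg α := by
    rw [← Fin.prod_univ_def, Finset.prod_div_distrib, Finset.prod_pow_eq_pow_sum,
      ← Nat.cast_prod, mfact, mdeg]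
  rw [← hprod]
  exact norm_applyFst_foldr_pderivC_le hΩ hG hs α (List.finRange n) (by simpa using hpΩ)
    (by simpa using hM)

theorem exists_eventually_forall_norm_applyFst_multiDeriv_le (hΩ : IsOpen Ω)
    (hG : DifferentiableOn ℂ G Ω) {p₀ : (Fin n → ℂ) × E} (hp₀ : p₀ ∈ Ω) :
    ∃ s > 0, ∃ M, ∀ᶠ p in 𝓝 p₀, ∀ α : Fin n → ℕ,
      ‖applyFst (multiDeriv α) G p‖ ≤ mfact α / s ^ mdeg α * M := by
  obtain ⟨R, hR, hRΩ, M, hM⟩ := exists_ball_subset_forall_norm_le (hΩ.mem_nhds hp₀)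
    (hG.continuousOn.continuousAt (hΩ.mem_nhds hp₀))
  set s := R / (n + 1) with hs_def
  have hs : 0 < s := by positivity
  have hsR : n * s + s = R := by rw [hs_def]; field_simp
  refine ⟨s, hs, M, ?_⟩
  filter_upwards [Metric.ball_mem_nhds p₀ hs] with p hp
  have hball : Metric.closedBall p (n * s) ⊆ Metric.ball p₀ R :=
    Metric.closedBall_subset_ball' (by linarith [Metric.mem_ball.1 hp])
  exact norm_applyFst_multiDeriv_le hΩ hG hs (hball.trans hRΩ) fun q hq => hM q (hball hq)

end Parametric

theorem norm_mul_div_mfact_le {n : ℕ} {α : Fin n → ℕ} {a b : ℂ} {s C M : ℝ} (hs : 0 < s)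
    (ha : ‖a‖ * (2 / s) ^ mdeg α ≤ C) (hb : ‖b‖ ≤ mfact α / s ^ mdeg α * M) :
    ‖a * b / mfact α‖ ≤ C * M * (1 / 2) ^ mdeg α := by
  have hα : (0 : ℝ) < mfact α := mod_cast mfact_pos α
  have hM : 0 ≤ M := nonneg_of_mul_nonneg_right ((norm_nonneg b).trans hb) (by positivity)
  calc ‖a * b / mfact α‖ = ‖a‖ * ‖b‖ / mfact α := by
        rw [norm_div, norm_mul, Complex.norm_natCast]
    _ ≤ ‖a‖ * (mfact α / s ^ mdeg α * M) / mfact α := by gcongr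
    _ = ‖a‖ * (2 / s) ^ mdeg α * M * (1 / 2) ^ mdeg α := by
        rw [div_pow 2, div_pow 1, one_pow]
        field_simp
    _ ≤ C * M * (1 / 2) ^ mdeg α := by gcongr

theorem statement4_general {n : ℕ} {E : Type*} [NormedAddCommGroup E] [NormedSpace ℂ E]
    {D : Set E} (hD : IsOpen D) {ξ : E → (Fin n → ℕ) → ℂ}
    (hhol : ∀ α, DifferentiableOn ℂ (fun w => ξ w α) D)
    (hbdd : ∀ w ∈ D, ∀ ρ : ℝ, 0 < ρ → ∃ C, ∀ᶠ w' in 𝓝 w, ∀ α, ‖ξ w' α‖ * ρ ^ mdeg α ≤ C)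
    {Ω : Set ((Fin n → ℂ) × E)} (hΩ : IsOpen Ω) {F : (Fin n → ℂ) × E → ℂ}
    (hF : DifferentiableOn ℂ F Ω) :
    DifferentiableOn ℂ (fun p => xiAct (ξ p.2) (fun z => F (z, p.2)) p.1)
      (Ω ∩ Prod.snd ⁻¹' D) := by
  intro p₀ hp₀
  obtain ⟨s, hs, M, hM⟩ := exists_eventually_forall_norm_applyFst_multiDeriv_le hΩ hF hp₀.1
  obtain ⟨C, hC⟩ := hbdd p₀.2 hp₀.2 (2 / s) (by positivity)
  have hnhds := inter_mem ((hΩ.inter (hD.preimage continuous_snd)).mem_nhds hp₀)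
    (hM.and (continuousAt_snd.eventually hC))
  have hsum : Summable fun α : Fin n → ℕ => C * M * (1 / 2) ^ mdeg α :=
    (summable_pow_mdeg n (by norm_num) (by norm_num)).mul_left (C * M)
  refine (differentiableAt_tsum_of_forall_norm_le hnhds hsum (fun α => ?_) fun α p hp =>
    norm_mul_div_mfact_le hs (hp.2.2 α) (hp.2.1 α)).differentiableWithinAt
  simp only [div_eq_mul_inv]
  refine DifferentiableOn.mul_const (DifferentiableOn.fun_mul ?_ ?_) _
  · exact (hhol α).comp differentiableOn_snd fun p hp => hp.1.2
  · exact (differentiableOn_applyFst_multiDeriv hΩ hF α).mono fun p hp => hp.1.1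

/-- If the functional-valued map `ξ(·)` is holomorphic on `D` and locally uniformly bounded,
and `F(z,w)` is holomorphic near `(z₀, w₀)`, then `(z,w) ↦ (ξ(w)·F(·,w))(z)` is holomorphic
near `(z₀, w₀)`. -/
theorem statement4 {n m : ℕ} (D : Set (Fin m → ℂ)) (hDo : IsOpen D) (hDc : IsConnected D)
    (ξ : (Fin m → ℂ) → (Fin n → ℕ) → ℂ) (hmem : ∀ w ∈ D, MemL1 (ξ w))
    (hhol : ∀ α : Fin n → ℕ, DifferentiableOn ℂ (fun w => ξ w α) D)
    (hlub : LocUnifBdd ξ D)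
    (w₀ : Fin m → ℂ) (hw₀ : w₀ ∈ D) (z₀ : Fin n → ℂ)
    (Ω : Set ((Fin n → ℂ) × (Fin m → ℂ))) (hΩo : IsOpen Ω) (hΩmem : (z₀, w₀) ∈ Ω)
    (F : (Fin n → ℂ) × (Fin m → ℂ) → ℂ) (hF : DifferentiableOn ℂ F Ω) :
    ∃ U ∈ 𝓝 ((z₀, w₀) : (Fin n → ℂ) × (Fin m → ℂ)),
      DifferentiableOn ℂ (fun p : (Fin n → ℂ) × (Fin m → ℂ) =>
        xiAct (ξ p.2) (fun z => F (z, p.2)) p.1) U :=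
  ⟨Ω ∩ Prod.snd ⁻¹' D, (hΩo.inter (hDo.preimage continuous_snd)).mem_nhds ⟨hΩmem, hw₀⟩,
    statement4_general hDo hhol (fun _ hw _ => hlub.exists_eventually_forall_norm_mul_pow_le hDo hw)
      hΩo hF⟩
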